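/- Let Ω be a Polish space. Every sequence (μ_n) of finite signed Borel measures on Ω that is weakly Cauchy (i.e., (∫ f dμ_n) converges for every bounded continuous f) converges weakly to a finite signed Borel measure μ, i.e., the space of bounded measures on a Polish space is weakly sequentially complete with respect to the duality with C_b(Ω). -/

import Mathlib

open Filter Topology MeasureTheory

/-- Integral of a bounded continuous function against a finite signed measure, via the
Jordan decomposition. -/
noncomputable def signedIntegral {Ω : Type*} [TopologicalSpace Ω] [MeasurableSpace Ω]
    (μ : MeasureTheory.SignedMeasure Ω) (f : BoundedContinuousFunction Ω ℝ) : ℝ :=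
  (∫ x, f x ∂μ.toJordanDecomposition.posPart) - ∫ x, f x ∂μ.toJordanDecomposition.negPart

/-!
Give the unit ball of `C_b(Ω)` the topology of uniform convergence on each member of a countable
exhaustion `U` of `Ω`. It is completely metrizable and every signed measure is continuous on it,
so by Baire's theorem a weakly Cauchy sequence is uniformly Cauchy, up to `ε`, near some `f₀`.
A function `g` of the ball vanishing on a large `U k` is a difference of two members of such a
neighbourhood, because `(1 - |g|) f₀` leaves room for `g`. Hence the sequence is uniformly Cauchy
up to `ε` on such `g`, and the positive parts are uniformly small outside some `U k`. Taking finite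
unions of closed balls around a dense sequence for `U`, the positive parts are uniformly tight, and
so are the negative parts. By Prokhorov's theorem both converge along an ultrafilter; the
difference of the limits is the weak limit, as a Cauchy sequence converges to its ultrafilter limit.
-/

open Set TopologicalSpace
open scoped BoundedContinuousFunction NNReal ENNReal UniformConvergence

section MutuallySingular

variable {Ω : Type*} [TopologicalSpace Ω]

/-- The continuous functions with values in `[0, 1]` which vanish off `V`: the functions against
which one tests the mass that a measure gives to the open set `V`. -/
def testFunctions (V : Set Ω) : Set (Ω →ᵇ ℝ) :=
  {g | (∀ x, g x ∈ Icc 0 1) ∧ EqOn g 0 Vᶜ}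

lemma norm_le_one_of_mem_testFunctions {V : Set Ω} {g : Ω →ᵇ ℝ} (hg : g ∈ testFunctions V) :
    ‖g‖ ≤ 1 :=
  (g.norm_le zero_le_one).2 fun x => abs_le.2 ⟨by linarith [(hg.1 x).1], (hg.1 x).2⟩

lemma testFunctions_mono {V W : Set Ω} (h : V ⊆ W) : testFunctions V ⊆ testFunctions W :=
  fun _ hg => ⟨hg.1, hg.2.mono (compl_subset_compl.2 h)⟩

variable [MeasurableSpace Ω]

lemma integral_le_measureReal_of_mem_testFunctions [OpensMeasurableSpace Ω] (ρ : Measure Ω)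
    [IsFiniteMeasure ρ] {V : Set Ω} (hV : MeasurableSet V) {g : Ω →ᵇ ℝ}
    (hg : g ∈ testFunctions V) : ∫ x, g x ∂ρ ≤ ρ.real V := by
  rw [← integral_indicator_one hV]
  exact integral_mono (g.integrable ρ) ((integrable_const 1).indicator hV)
    (le_indicator (fun x _ => (hg.1 x).2) fun x hx => (hg.2 hx).le)

lemma measureReal_le_integral_of_eqOn_one [OpensMeasurableSpace Ω] (ρ : Measure Ω)
    [IsFiniteMeasure ρ] {K : Set Ω} (hK : MeasurableSet K) {g : Ω →ᵇ ℝ} (hg : ∀ x, 0 ≤ g x)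
    (hgK : EqOn g 1 K) : ρ.real K ≤ ∫ x, g x ∂ρ := by
  rw [← integral_indicator_one hK]
  exact integral_mono ((integrable_const 1).indicator hK) (g.integrable ρ)
    (indicator_le' (fun x hx => (hgK hx).ge) fun x _ => hg x)

lemma exists_isClosed_subset_isOpen_of_mutuallySingular [OpensMeasurableSpace Ω]
    {p q : Measure Ω} [IsFiniteMeasure p] [p.WeaklyRegular] [q.OuterRegular] (hpq : p ⟂ₘ q)
    {V : Set Ω} (hV : IsOpen V) {ε : ℝ} (hε : 0 < ε) :
    ∃ K W, IsClosed K ∧ IsOpen W ∧ K ⊆ W ∧ W ⊆ V ∧ p.real V ≤ p.real K + ε ∧ q.real W ≤ ε := by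
  obtain ⟨S, hS, hpS, hqS⟩ := hpq
  have hε' : ENNReal.ofReal ε ≠ 0 := by simpa using hε
  obtain ⟨K, hKVS, hK, hpK⟩ := (hV.measurableSet.inter hS.compl).exists_isClosed_lt_add
    (measure_ne_top p _) hε'
  have hpV : p (V ∩ Sᶜ) = p V := measure_inter_conull (by simpa using hpS)
  have hqK : q K = 0 := measure_mono_null (hKVS.trans inter_subset_right) hqS
  obtain ⟨W, hKW, hW, hqW⟩ := K.exists_isOpen_lt_add (μ := q) (by simp [hqK]) hε'
  rw [hpV] at hpK
  rw [hqK, zero_add] at hqW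
  refine ⟨K, V ∩ W, hK, hV.inter hW, subset_inter (hKVS.trans inter_subset_left) hKW,
    inter_subset_left, ?_, ?_⟩
  · have := ENNReal.toReal_mono (by finiteness) hpK.le
    rwa [ENNReal.toReal_add (by finiteness) (by finiteness), ENNReal.toReal_ofReal hε.le] at this
  · exact ENNReal.toReal_le_of_le_ofReal hε.le ((measure_mono inter_subset_right).trans hqW.le)

lemma isLUB_integral_sub_integral_of_mutuallySingular [OpensMeasurableSpace Ω] [NormalSpace Ω]
    {p q : Measure Ω} [IsFiniteMeasure p] [IsFiniteMeasure q] [p.WeaklyRegular] [q.OuterRegular]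
    (hpq : p ⟂ₘ q) {V : Set Ω} (hV : IsOpen V) :
    IsLUB ((fun g : Ω →ᵇ ℝ => ∫ x, g x ∂p - ∫ x, g x ∂q) '' testFunctions V) (p.real V) := by
  constructor
  · rintro _ ⟨g, hg, rfl⟩
    have hq : 0 ≤ ∫ x, g x ∂q := integral_nonneg fun x => (hg.1 x).1
    have hp := integral_le_measureReal_of_mem_testFunctions p hV.measurableSet hg
    exact (sub_le_self _ hq).trans hp
  · intro c hc
    refine le_of_forall_pos_le_add fun ε hε => ?_
    obtain ⟨K, W, hK, hW, hKW, hWV, hpK, hqW⟩ :=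
      exists_isClosed_subset_isOpen_of_mutuallySingular hpq hV (half_pos hε)
    obtain ⟨g, hg0, hg1, hg⟩ := exists_bounded_zero_one_of_closed hW.isClosed_compl hK
      (disjoint_compl_left_iff_subset.2 hKW)
    have hgW : g ∈ testFunctions W := ⟨hg, hg0⟩
    have hgc := hc (mem_image_of_mem _ (testFunctions_mono hWV hgW))
    have hp := measureReal_le_integral_of_eqOn_one p hK.measurableSet (fun x => (hg x).1) hg1
    have hq := integral_le_measureReal_of_mem_testFunctions q hW.measurableSet hgW
    linarith

end MutuallySingular

section SignedIntegral

variable {Ω : Type*} [TopologicalSpace Ω] [MeasurableSpace Ω]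

lemma signedIntegral_neg (μ : SignedMeasure Ω) (f : Ω →ᵇ ℝ) :
    signedIntegral (-μ) f = -signedIntegral μ f := by
  simp only [signedIntegral, SignedMeasure.toJordanDecomposition_neg,
    JordanDecomposition.neg_posPart, JordanDecomposition.neg_negPart, neg_sub]

lemma signedIntegral_toSignedMeasure_sub [OpensMeasurableSpace Ω] (p q : Measure Ω)
    [IsFiniteMeasure p] [IsFiniteMeasure q] (f : Ω →ᵇ ℝ) :
    signedIntegral (p.toSignedMeasure - q.toSignedMeasure) f = ∫ x, f x ∂p - ∫ x, f x ∂q := by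
  set j := (p.toSignedMeasure - q.toSignedMeasure).toJordanDecomposition with hj
  have hj_sub : j.posPart.toSignedMeasure - j.negPart.toSignedMeasure =
      p.toSignedMeasure - q.toSignedMeasure :=
    SignedMeasure.toSignedMeasure_toJordanDecomposition _
  have hj_add : j.posPart + q = p + j.negPart := by
    rwa [← Measure.toSignedMeasure_eq_toSignedMeasure_iff, Measure.toSignedMeasure_add,
      Measure.toSignedMeasure_add, ← sub_eq_sub_iff_add_eq_add]
  have hint := congrArg (fun ρ : Measure Ω => ∫ x, f x ∂ρ) hj_add
  simp only [integral_add_measure (f.integrable _) (f.integrable _)] at hint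
  simp only [signedIntegral, ← hj]
  linarith

/-- Integration against a signed measure as a bounded linear functional on `C_b(Ω)`. -/
noncomputable def signedIntegralCLM [OpensMeasurableSpace Ω] (μ : SignedMeasure Ω) :
    (Ω →ᵇ ℝ) →L[ℝ] ℝ :=
  LinearMap.mkContinuous
    { toFun := signedIntegral μ
      map_add' f g := by
        simp only [signedIntegral, BoundedContinuousFunction.coe_add, Pi.add_apply,
          integral_add (f.integrable _) (g.integrable _)]
        ring
      map_smul' c f := by
        simp only [signedIntegral, BoundedContinuousFunction.coe_smul, smul_eq_mul,
          integral_const_mul, RingHom.id_apply]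
        ring }
    (μ.toJordanDecomposition.posPart.real univ + μ.toJordanDecomposition.negPart.real univ)
    fun f => by
      rw [add_mul]
      exact (norm_sub_le _ _).trans
        (add_le_add (f.norm_integral_le_mul_norm _) (f.norm_integral_le_mul_norm _))

lemma isLUB_signedIntegral_testFunctions [PseudoMetrizableSpace Ω] [BorelSpace Ω]
    (μ : SignedMeasure Ω) {V : Set Ω} (hV : IsOpen V) :
    IsLUB (signedIntegral μ '' testFunctions V) (μ.toJordanDecomposition.posPart.real V) :=
  isLUB_integral_sub_integral_of_mutuallySingular μ.toJordanDecomposition.mutuallySingular hV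

lemma exists_forall_measureReal_posPart_univ_le [PseudoMetrizableSpace Ω] [BorelSpace Ω]
    {ι : Type*} {μ : ι → SignedMeasure Ω}
    (hμ : ∀ f : Ω →ᵇ ℝ, Bornology.IsBounded (range fun i => signedIntegral (μ i) f)) :
    ∃ C, ∀ i, (μ i).toJordanDecomposition.posPart.real univ ≤ C := by
  obtain ⟨C, hC⟩ : ∃ C, ∀ i, ‖signedIntegralCLM (μ i)‖ ≤ C := banach_steinhaus fun f => by
    obtain ⟨C, hC⟩ := (hμ f).exists_norm_le
    exact ⟨C, fun i => hC _ (mem_range_self i)⟩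
  refine ⟨C, fun i => (isLUB_signedIntegral_testFunctions (μ i) isOpen_univ).2 ?_⟩
  rintro _ ⟨g, hg, rfl⟩
  calc signedIntegral (μ i) g
    _ ≤ ‖signedIntegralCLM (μ i) g‖ := le_abs_self _
    _ ≤ ‖signedIntegralCLM (μ i)‖ := (signedIntegralCLM (μ i)).unit_le_opNorm g
      (norm_le_one_of_mem_testFunctions hg)
    _ ≤ C := hC i

end SignedIntegral

/-- The closed unit ball of `C_b(Ω)`, to be given the uniform structure of uniform convergence on
each `U k` instead of that of the norm. -/
def LocalUnitBall {Ω : Type*} [TopologicalSpace Ω] (_U : ℕ → Set Ω) : Type _ :=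
  {f : Ω →ᵇ ℝ // ‖f‖ ≤ 1}

namespace LocalUnitBall

variable {Ω : Type*} [TopologicalSpace Ω] {U : ℕ → Set Ω}

/-- The inclusion of the unit ball in the space of all functions with the topology of uniform
convergence on each `U k`. -/
def toUniformOnFun (f : LocalUnitBall U) : Ω →ᵤ[range U] ℝ :=
  UniformOnFun.ofFun (range U) f.1

instance : UniformSpace (LocalUnitBall U) :=
  UniformSpace.comap toUniformOnFun inferInstance

instance : Nonempty (LocalUnitBall U) :=
  ⟨⟨0, norm_zero.trans_le zero_le_one⟩⟩

lemma isUniformInducing_toUniformOnFun :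
    IsUniformInducing (toUniformOnFun : LocalUnitBall U → Ω →ᵤ[range U] ℝ) :=
  ⟨rfl⟩

lemma range_toUniformOnFun : range (toUniformOnFun : LocalUnitBall U → Ω →ᵤ[range U] ℝ) =
    {f | Continuous (UniformOnFun.toFun (range U) f)} ∩
      {f | ∀ x, |UniformOnFun.toFun (range U) f x| ≤ 1} := by
  ext f
  constructor
  · rintro ⟨f, rfl⟩
    exact ⟨f.1.continuous, (f.1.norm_le zero_le_one).1 f.2⟩
  · rintro ⟨hf, hf1⟩
    exact ⟨⟨.ofNormedAddCommGroup _ hf 1 hf1,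
      BoundedContinuousFunction.norm_ofNormedAddCommGroup_le hf zero_le_one hf1⟩, rfl⟩

lemma continuous_eval (hU : ∀ x, ∃ k, x ∈ U k) (x : Ω) :
    Continuous fun f : LocalUnitBall U => f.1 x := by
  have hcover : ⋃₀ range U = univ := by simpa [sUnion_range, iUnion_eq_univ_iff] using hU
  exact (UniformOnFun.uniformContinuous_eval hcover x).continuous.comp
    isUniformInducing_toUniformOnFun.uniformContinuous.continuous

lemma completeSpace (hU : ∀ x, ∃ k, U k ∈ 𝓝 x) : CompleteSpace (LocalUnitBall U) := by
  have hcoherent : IsCoherentWith (range U) := .of_nhds fun x => by simpa using hU x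
  have hcover : ⋃₀ range U = univ := by
    simpa [sUnion_range, iUnion_eq_univ_iff] using fun x => (hU x).imp fun _ => mem_of_mem_nhds
  have hclosed : IsClosed (range (toUniformOnFun : LocalUnitBall U → Ω →ᵤ[range U] ℝ)) := by
    rw [range_toUniformOnFun]
    refine (UniformOnFun.isClosed_setOfPred_continuous hcoherent).inter ?_
    simp only [ofPred_forall]
    exact isClosed_iInter fun x => isClosed_le
      (UniformOnFun.uniformContinuous_eval hcover x).continuous.abs continuous_const
  exact isUniformInducing_toUniformOnFun.completeSpace hclosed.isComplete

lemma isCountablyGenerated_uniformity (hUmono : Monotone U) :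
    IsCountablyGenerated (uniformity (LocalUnitBall U)) := by
  have : IsCountablyGenerated (uniformity (Ω →ᵤ[range U] ℝ)) :=
    UniformOnFun.isCountablyGenerated_uniformity (range U) mem_range_self hUmono
      (forall_mem_range.2 fun k => ⟨k, subset_rfl⟩)
  exact comap.isCountablyGenerated _ _

lemma baireSpace (hUmono : Monotone U) (hU : ∀ x, ∃ k, U k ∈ 𝓝 x) :
    BaireSpace (LocalUnitBall U) := by
  have := completeSpace hU
  have := isCountablyGenerated_uniformity hUmono
  infer_instance

lemma exists_forall_eqOn_mem (hUmono : Monotone U) {f₀ : LocalUnitBall U}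
    {A : Set (LocalUnitBall U)} (hA : A ∈ 𝓝 f₀) :
    ∃ k, ∀ f : LocalUnitBall U, EqOn f.1 f₀.1 (U k) → f ∈ A := by
  rw [isUniformInducing_toUniformOnFun.isInducing.nhds_eq_comap, mem_comap] at hA
  obtain ⟨T, hT, hTA⟩ := hA
  obtain ⟨⟨_, t⟩, ⟨⟨k, rfl⟩, ht⟩, hkT⟩ := (UniformOnFun.hasBasis_nhds Ω ℝ (range U) _
    (range_nonempty U) (directedOn_range.2 hUmono.directed_le)).mem_iff.1 hT
  refine ⟨k, fun f hf => hTA (hkT fun x hx => ?_)⟩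
  have : (f.1 x, f₀.1 x) ∈ t := hf hx ▸ refl_mem_uniformity ht
  exact this

lemma exists_sub_eq_of_eqOn_zero {S : Set Ω} {g : Ω →ᵇ ℝ} (hg : ‖g‖ ≤ 1) (hgS : EqOn g 0 S)
    (f₀ : LocalUnitBall U) :
    ∃ f₁ f₂ : LocalUnitBall U, EqOn f₁.1 f₀.1 S ∧ EqOn f₂.1 f₀.1 S ∧ f₁.1 - f₂.1 = g := by
  let f₂ : Ω →ᵇ ℝ := (1 - |g|) * f₀.1
  have hf₂_apply (x : Ω) : f₂ x = (1 - |g x|) * f₀.1 x := rfl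
  have hf₂ (x : Ω) : |f₂ x| ≤ 1 - |g x| := by
    have hgx : 0 ≤ 1 - |g x| := sub_nonneg.2 ((g.norm_coe_le_norm x).trans hg)
    rw [hf₂_apply, abs_mul, abs_of_nonneg hgx]
    exact mul_le_of_le_one_right hgx ((f₀.1.norm_coe_le_norm x).trans f₀.2)
  have hf₂S : EqOn f₂ f₀.1 S := fun x hx => by simp [hf₂_apply, hgS hx]
  refine ⟨⟨f₂ + g, (BoundedContinuousFunction.norm_le zero_le_one).2 fun x => ?_⟩,
    ⟨f₂, (f₂.norm_le zero_le_one).2 fun x => ?_⟩, fun x hx => ?_, hf₂S, add_sub_cancel_left f₂ g⟩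
  · exact (abs_add_le (f₂ x) (g x)).trans (by linarith [hf₂ x])
  · exact (hf₂ x).trans (by linarith [abs_nonneg (g x)])
  · simp [hf₂S hx, hgS hx]

lemma exists_forall_eqOn_abs_sub_le (hUmono : Monotone U) (hU : ∀ x, ∃ k, U k ∈ 𝓝 x)
    {Λ : ℕ → LocalUnitBall U → ℝ} (hΛ : ∀ n, Continuous (Λ n))
    (hcauchy : ∀ f, CauchySeq fun n => Λ n f) {ε : ℝ} (hε : 0 < ε) :
    ∃ (f₀ : LocalUnitBall U) (k N : ℕ), ∀ f : LocalUnitBall U, EqOn f.1 f₀.1 (U k) →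
      ∀ n ≥ N, ∀ m ≥ N, |Λ n f - Λ m f| ≤ ε := by
  have := baireSpace hUmono hU
  let A (N : ℕ) : Set (LocalUnitBall U) := {f | ∀ n ≥ N, ∀ m ≥ N, |Λ n f - Λ m f| ≤ ε}
  have hA_closed (N : ℕ) : IsClosed (A N) := by
    simp only [A, ofPred_forall]
    exact isClosed_iInter fun n => isClosed_iInter fun _ => isClosed_iInter fun m =>
      isClosed_iInter fun _ => isClosed_le ((hΛ n).sub (hΛ m)).abs continuous_const
  have hA_univ : ⋃ N, A N = univ := iUnion_eq_univ_iff.2 fun f => by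
    obtain ⟨N, hN⟩ := Metric.cauchySeq_iff.1 (hcauchy f) ε hε
    exact ⟨N, fun n hn m hm => (hN n hn m hm).le⟩
  obtain ⟨N, f₀, hf₀⟩ := nonempty_interior_of_iUnion_of_closed hA_closed hA_univ
  obtain ⟨k, hk⟩ := exists_forall_eqOn_mem hUmono (mem_interior_iff_mem_nhds.1 hf₀)
  exact ⟨f₀, k, N, hk⟩

lemma exists_forall_eqOn_zero_abs_sub_le (hUmono : Monotone U) (hU : ∀ x, ∃ k, U k ∈ 𝓝 x)
    {Λ : ℕ → (Ω →ᵇ ℝ) →ₗ[ℝ] ℝ} (hΛ : ∀ n, Continuous fun f : LocalUnitBall U => Λ n f.1)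
    (hcauchy : ∀ f, CauchySeq fun n => Λ n f) {ε : ℝ} (hε : 0 < ε) :
    ∃ k N, ∀ g : Ω →ᵇ ℝ, ‖g‖ ≤ 1 → EqOn g 0 (U k) →
      ∀ n ≥ N, ∀ m ≥ N, |Λ n g - Λ m g| ≤ ε := by
  obtain ⟨f₀, k, N, hN⟩ :=
    exists_forall_eqOn_abs_sub_le hUmono hU hΛ (fun f => hcauchy f.1) (half_pos hε)
  refine ⟨k, N, fun g hg hgU n hn m hm => ?_⟩
  obtain ⟨f₁, f₂, hf₁, hf₂, rfl⟩ := exists_sub_eq_of_eqOn_zero hg hgU f₀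
  calc |Λ n (f₁.1 - f₂.1) - Λ m (f₁.1 - f₂.1)|
    _ = |(Λ n f₁.1 - Λ m f₁.1) - (Λ n f₂.1 - Λ m f₂.1)| := by
      rw [map_sub, map_sub, sub_sub_sub_comm]
    _ ≤ |Λ n f₁.1 - Λ m f₁.1| + |Λ n f₂.1 - Λ m f₂.1| := abs_sub _ _
    _ ≤ ε / 2 + ε / 2 := add_le_add (hN f₁ hf₁ n hn m hm) (hN f₂ hf₂ n hn m hm)
    _ = ε := add_halves ε

variable [MeasurableSpace Ω] [OpensMeasurableSpace Ω]

lemma continuous_integral (hUmono : Monotone U) (hU : ∀ x, ∃ k, x ∈ U k) (ρ : Measure Ω)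
    [IsFiniteMeasure ρ] : Continuous fun f : LocalUnitBall U => ∫ x, f.1 x ∂ρ := by
  have := isCountablyGenerated_uniformity hUmono
  exact continuous_of_dominated (bound := fun _ => 1)
    (fun f => f.1.continuous.measurable.aestronglyMeasurable)
    (fun f => ae_of_all _ fun x => (f.1.norm_coe_le_norm x).trans f.2) (integrable_const 1)
    (ae_of_all _ (continuous_eval hU))

lemma continuous_signedIntegral (hUmono : Monotone U) (hU : ∀ x, ∃ k, x ∈ U k)
    (μ : SignedMeasure Ω) : Continuous fun f : LocalUnitBall U => signedIntegral μ f.1 :=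
  (continuous_integral hUmono hU _).sub (continuous_integral hUmono hU _)

end LocalUnitBall

section Tightness

variable {Ω : Type*} [MeasurableSpace Ω]

lemma tendsto_measureReal_compl_of_monotone (ρ : Measure Ω) [IsFiniteMeasure ρ]
    {U : ℕ → Set Ω} (hUmono : Monotone U) (hUmeas : ∀ k, MeasurableSet (U k))
    (hU : ⋃ k, U k = univ) : Tendsto (fun k => ρ.real (U k)ᶜ) atTop (𝓝 0) := by
  have h := tendsto_measure_iInter_atTop (μ := ρ) (fun k => (hUmeas k).compl.nullMeasurableSet)
    (fun _ _ hij => compl_subset_compl.2 (hUmono hij)) ⟨0, measure_ne_top _ _⟩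
  rw [← compl_iUnion, hU, compl_univ, measure_empty] at h
  exact (ENNReal.tendsto_toReal ENNReal.zero_ne_top).comp h

lemma isClosed_accumulate {X : Type*} [TopologicalSpace X] {F : ℕ → Set X}
    (hF : ∀ i, IsClosed (F i)) (k : ℕ) : IsClosed (accumulate F k) :=
  (finite_Iic k).isClosed_biUnion fun i _ => hF i

lemma exists_accumulate_closedBall_mem_nhds {X : Type*} [PseudoMetricSpace X] {D : ℕ → X}
    (hD : DenseRange D) {r : ℝ} (hr : 0 < r) (x : X) :
    ∃ k, accumulate (fun i => Metric.closedBall (D i) r) k ∈ 𝓝 x := by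
  obtain ⟨k, hk⟩ := hD.exists_dist_lt x hr
  exact ⟨k, mem_of_superset (Metric.closedBall_mem_nhds_of_mem hk)
    (subset_accumulate (s := fun i => Metric.closedBall (D i) r))⟩

lemma isCompact_iInter_accumulate_closedBall {X : Type*} [PseudoMetricSpace X] [CompleteSpace X]
    (D : ℕ → X) {r : ℕ → ℝ} (hr : Tendsto r atTop (𝓝 0)) (k : ℕ → ℕ) :
    IsCompact (⋂ m, accumulate (fun i => Metric.closedBall (D i) (r m)) (k m)) := by
  refine TotallyBounded.isCompact_of_isClosed (Metric.totallyBounded_iff.2 fun η hη => ?_)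
    (isClosed_iInter fun m => isClosed_accumulate (fun _ => Metric.isClosed_closedBall) _)
  obtain ⟨m, hm⟩ := (hr.eventually_lt_const hη).exists
  refine ⟨D '' Iic (k m), (finite_Iic _).image _, (iInter_subset _ m).trans ?_⟩
  rw [biUnion_image]
  exact iUnion₂_mono fun i _ => Metric.closedBall_subset_ball hm

lemma isTightMeasureSet_of_forall_exists_measure_compl_le [TopologicalSpace Ω]
    [IsCompletelyPseudoMetrizableSpace Ω] [SecondCountableTopology Ω] {S : Set (Measure Ω)}
    (hS : ∀ U : ℕ → Set Ω, Monotone U → (∀ k, IsClosed (U k)) → (∀ x, ∃ k, U k ∈ 𝓝 x) →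
      ∀ ε : ℝ≥0∞, 0 < ε → ∃ k, ∀ ρ ∈ S, ρ (U k)ᶜ ≤ ε) :
    IsTightMeasureSet S := by
  refine isTightMeasureSet_iff_exists_isCompact_measure_compl_le.2 fun ε hε => ?_
  rcases isEmpty_or_nonempty Ω with hΩ | hΩ
  · exact ⟨∅, isCompact_empty, fun ρ _ => by simp [Measure.eq_zero_of_isEmpty]⟩
  let _ := upgradeIsCompletelyPseudoMetrizable Ω
  obtain ⟨r, -, hr_pos, hr⟩ := exists_seq_strictAnti_tendsto (0 : ℝ)
  let U (m : ℕ) : ℕ → Set Ω := accumulate fun i => Metric.closedBall (denseSeq Ω i) (r m)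
  obtain ⟨δ, hδ, hδε⟩ := ENNReal.exists_pos_sum_of_countable' hε.ne' ℕ
  choose k hk using fun m => hS (U m) monotone_accumulate
    (isClosed_accumulate fun _ => Metric.isClosed_closedBall)
    (exists_accumulate_closedBall_mem_nhds (denseRange_denseSeq Ω) (hr_pos m)) (δ m) (hδ m)
  refine ⟨⋂ m, U m (k m), isCompact_iInter_accumulate_closedBall _ hr k, fun ρ hρ => ?_⟩
  calc ρ (⋂ m, U m (k m))ᶜ
    _ = ρ (⋃ m, (U m (k m))ᶜ) := by rw [compl_iInter]
    _ ≤ ∑' m, ρ (U m (k m))ᶜ := measure_iUnion_le _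
    _ ≤ ∑' m, δ m := ENNReal.tsum_le_tsum fun m => hk m ρ hρ
    _ ≤ ε := hδε.le

lemma isCompact_closure_of_isTightMeasureSet_of_mass_le [TopologicalSpace Ω] [T2Space Ω]
    [BorelSpace Ω] {S : Set (FiniteMeasure Ω)}
    (hS : IsTightMeasureSet ((fun ρ : FiniteMeasure Ω => (ρ : Measure Ω)) '' S)) {C : ℝ≥0}
    (hC : ∀ ρ ∈ S, ρ.mass ≤ C) : IsCompact (closure S) := by
  obtain ⟨u, -, hu_pos, hu⟩ := exists_seq_strictAnti_tendsto (0 : ℝ≥0)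
  choose K hK hKu using fun m => isTightMeasureSet_iff_exists_isCompact_measure_compl_le.1 hS
    (u m) (ENNReal.coe_pos.2 (hu_pos m))
  refine (isCompact_setOfPred_finiteMeasure_mass_le_compl_isCompact_le C hu
    (isCompact_accumulate hK) (.inr monotone_accumulate)).closure_of_subset
    fun ρ hρ => ⟨hC ρ hρ, fun m => ?_⟩
  rw [← ENNReal.coe_le_coe, FiniteMeasure.ennreal_coeFn_eq_coeFn_toMeasure]
  exact (measure_mono (compl_subset_compl.2 subset_accumulate)).trans
    (hKu m ρ (mem_image_of_mem _ hρ))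

end Tightness

section WeaklyCauchy

variable {Ω : Type*} [TopologicalSpace Ω] [MeasurableSpace Ω] [BorelSpace Ω]
  {μ : ℕ → SignedMeasure Ω}

lemma exists_forall_measureReal_posPart_compl_le [PseudoMetrizableSpace Ω]
    (hcauchy : ∀ f : Ω →ᵇ ℝ, CauchySeq fun n => signedIntegral (μ n) f) {U : ℕ → Set Ω}
    (hUmono : Monotone U) (hUclosed : ∀ k, IsClosed (U k)) (hU : ∀ x, ∃ k, U k ∈ 𝓝 x) {ε : ℝ}
    (hε : 0 < ε) : ∃ k, ∀ n, (μ n).toJordanDecomposition.posPart.real (U k)ᶜ ≤ ε := by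
  have hcover (x : Ω) : ∃ k, x ∈ U k := (hU x).imp fun _ => mem_of_mem_nhds
  obtain ⟨k₀, N, hN⟩ := LocalUnitBall.exists_forall_eqOn_zero_abs_sub_le hUmono hU
    (Λ := fun n => (signedIntegralCLM (μ n)).toLinearMap)
    (fun n => LocalUnitBall.continuous_signedIntegral hUmono hcover (μ n)) hcauchy (half_pos hε)
  have hlim (n : ℕ) : ∀ᶠ k in atTop, (μ n).toJordanDecomposition.posPart.real (U k)ᶜ ≤ ε / 2 :=
    (tendsto_measureReal_compl_of_monotone _ hUmono (fun k => (hUclosed k).measurableSet)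
      (iUnion_eq_univ_iff.2 hcover)).eventually_le_const (half_pos hε)
  obtain ⟨k, hk, hk₀⟩ := (((finite_Iic N).eventually_all.2 fun n _ => hlim n).and
    (eventually_ge_atTop k₀)).exists
  refine ⟨k, fun n => ?_⟩
  rcases le_total n N with hn | hn
  · exact (hk n hn).trans (half_le_self hε.le)
  refine (isLUB_signedIntegral_testFunctions (μ n) (hUclosed k).isOpen_compl).2 ?_
  rintro _ ⟨g, hg, rfl⟩
  have hgU : EqOn g 0 (U k₀) := hg.2.mono (by rw [compl_compl]; exact hUmono hk₀)
  calc signedIntegral (μ n) g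
    _ = signedIntegral (μ N) g + (signedIntegral (μ n) g - signedIntegral (μ N) g) := by ring
    _ ≤ (μ N).toJordanDecomposition.posPart.real (U k)ᶜ + ε / 2 := add_le_add
      ((isLUB_signedIntegral_testFunctions (μ N) (hUclosed k).isOpen_compl).1
        (mem_image_of_mem _ hg))
      ((le_abs_self _).trans
        (hN g (norm_le_one_of_mem_testFunctions hg) hgU n hn N le_rfl))
    _ ≤ ε / 2 + ε / 2 := add_le_add_left (hk N self_mem_Iic) _
    _ = ε := add_halves ε

lemma isTightMeasureSet_range_posPart [IsCompletelyPseudoMetrizableSpace Ω]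
    [SecondCountableTopology Ω]
    (hcauchy : ∀ f : Ω →ᵇ ℝ, CauchySeq fun n => signedIntegral (μ n) f) :
    IsTightMeasureSet (range fun n => (μ n).toJordanDecomposition.posPart) := by
  refine isTightMeasureSet_of_forall_exists_measure_compl_le
    fun U hUmono hUclosed hU ε hε => ?_
  obtain ⟨δ, hδ, hδε⟩ := ENNReal.lt_iff_exists_nnreal_btwn.1 hε
  obtain ⟨k, hk⟩ := exists_forall_measureReal_posPart_compl_le hcauchy hUmono hUclosed hU
    (NNReal.coe_pos.2 (ENNReal.coe_pos.1 hδ))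
  refine ⟨k, forall_mem_range.2 fun n => le_trans ?_ hδε.le⟩
  exact (ENNReal.le_ofReal_iff_toReal_le (by finiteness) δ.2).2 (hk n) |>.trans_eq
    ENNReal.ofReal_coe_nnreal

lemma exists_tendsto_integral_posPart [PolishSpace Ω]
    (hcauchy : ∀ f : Ω →ᵇ ℝ, CauchySeq fun n => signedIntegral (μ n) f) (l : Ultrafilter ℕ) :
    ∃ ρ : FiniteMeasure Ω, ∀ f : Ω →ᵇ ℝ,
      Tendsto (fun n => ∫ x, f x ∂(μ n).toJordanDecomposition.posPart) l
        (𝓝 (∫ x, f x ∂(ρ : Measure Ω))) := by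
  let P (n : ℕ) : FiniteMeasure Ω := ⟨(μ n).toJordanDecomposition.posPart, inferInstance⟩
  obtain ⟨C, hC⟩ := exists_forall_measureReal_posPart_univ_le fun f => (hcauchy f).isBounded_range
  have hmass : ∀ ρ ∈ range P, ρ.mass ≤ C.toNNReal := forall_mem_range.2 fun n =>
    NNReal.le_toNNReal_of_coe_le (hC n)
  have htight : IsTightMeasureSet ((fun ρ : FiniteMeasure Ω => (ρ : Measure Ω)) '' range P) := by
    rw [← range_comp]
    exact isTightMeasureSet_range_posPart hcauchy
  obtain ⟨ρ, -, hρ⟩ := (isCompact_closure_of_isTightMeasureSet_of_mass_le htight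
    hmass).ultrafilter_le_nhds (l.map P) (le_principal_iff.2 (mem_map.2
      (Eventually.of_forall fun n => subset_closure (mem_range_self n))))
  exact ⟨ρ, FiniteMeasure.tendsto_iff_forall_integral_tendsto.1 hρ⟩

end WeaklyCauchy

/-- Alexandroff: On a Polish space, every sequence of finite signed Borel
measures that is weakly Cauchy (against every bounded continuous function) converges
weakly to a finite signed Borel measure. -/
theorem stmt8 (Ω : Type*) [TopologicalSpace Ω] [PolishSpace Ω]
    [MeasurableSpace Ω] [BorelSpace Ω]
    (μ : ℕ → MeasureTheory.SignedMeasure Ω)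
    (hcauchy : ∀ f : BoundedContinuousFunction Ω ℝ,
      CauchySeq (fun n => signedIntegral (μ n) f)) :
    ∃ ν : MeasureTheory.SignedMeasure Ω, ∀ f : BoundedContinuousFunction Ω ℝ,
      Filter.Tendsto (fun n => signedIntegral (μ n) f) Filter.atTop
        (nhds (signedIntegral ν f)) := by
  have hcauchy_neg (f : Ω →ᵇ ℝ) : CauchySeq fun n => signedIntegral (-μ n) f := by
    simp only [signedIntegral_neg]
    exact (hcauchy f).neg
  obtain ⟨p, hp⟩ := exists_tendsto_integral_posPart hcauchy (hyperfilter ℕ)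
  obtain ⟨q, hq⟩ := exists_tendsto_integral_posPart hcauchy_neg (hyperfilter ℕ)
  simp only [SignedMeasure.toJordanDecomposition_neg, JordanDecomposition.neg_posPart] at hq
  refine ⟨(p : Measure Ω).toSignedMeasure - (q : Measure Ω).toSignedMeasure, fun f => ?_⟩
  rw [signedIntegral_toSignedMeasure_sub]
  obtain ⟨a, ha⟩ := cauchySeq_tendsto_of_complete (hcauchy f)
  rwa [tendsto_nhds_unique ((hp f).sub (hq f)) (ha.mono_left Nat.hyperfilter_le_atTop)]
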